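/- Let G be a simple graph on Fin N, let θ : Fin N → ℝ be a completely degenerate equilibrium of the identical Kuramoto system on G, and let j, k be adjacent vertices with θ k ≡ θ j + π/2 (mod 2π). For x ∈ ℝ define θ^x by θ^x_j = θ j + x, θ^x_k = θ k − x, and θ^x_h = θ h for h ∉ {j,k}. Then for every x, E(θ) − E(θ^x) = sin(2x) − 2·sin(x), where E is the energy E(φ) = (1/2)·∑_{p,q} a(p,q)·(1 − cos(φ p − φ q)). -/

import Mathlib

open Real

open Classical in
/-- Adjacency indicator: `1` if `j` and `k` are adjacent in `G`, `0` otherwise. -/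
noncomputable def adjInd {V : Type*} (G : SimpleGraph V) (j k : V) : ℝ :=
  if G.Adj j k then 1 else 0

/-- A completely degenerate equilibrium of the identical Kuramoto system on `G`. -/
def IsCDE {V : Type*} [Fintype V] (G : SimpleGraph V) (θ : V → ℝ) : Prop :=
  (∀ k, ∑ j, adjInd G j k * Real.sin (θ j - θ k) = 0) ∧
  (∀ j k, G.Adj j k → Real.cos (θ j - θ k) = 0)

/-- The energy of the identical Kuramoto system (sum over ordered pairs, halved). -/
noncomputable def energy {N : ℕ} (G : SimpleGraph (Fin N)) (φ : Fin N → ℝ) : ℝ :=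
  (1 / 2) * ∑ p, ∑ q, adjInd G p q * (1 - Real.cos (φ p - φ q))

/-!
Let `c p q` be the antisymmetric coupling term. A perturbation `η` of a completely degenerate phase
vector changes the energy by `½ ∑ c p q * sin (η p - η q)`, since the even part in the expansion of
each cosine vanishes. Balance of the couplings gives `∑ c p q * (u p - u q) = 0` for every `u`;
taking `u = sin ∘ η` replaces each `sin (η p - η q)` by `sin (η p - η q) - (sin (η p) - sin (η q))`,
which vanishes as soon as `η p = 0` or `η q = 0`. If `η` is supported on `{j, k}`, only the pairs
`(j, k)` and `(k, j)` survive.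
-/

section Antisymmetric

variable {V R : Type*} [Fintype V] [CommRing R]

theorem sum_sum_mul_sub_of_antisymm {w : V → V → R} (hw : ∀ p q, w p q = -w q p) (u : V → R) :
    ∑ p, ∑ q, w p q * (u p - u q) = 2 * ∑ p, u p * ∑ q, w p q := by
  have hswap : ∑ p, ∑ q, w p q * u q = -∑ p, ∑ q, w p q * u p := by
    rw [Finset.sum_comm]
    simp_rw [← Finset.sum_neg_distrib]
    exact Finset.sum_congr rfl fun p _ => Finset.sum_congr rfl fun q _ => by rw [hw q p, neg_mul]
  have hpull : ∑ p, ∑ q, w p q * u p = ∑ p, u p * ∑ q, w p q := by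
    simp_rw [Finset.mul_sum, mul_comm]
  simp_rw [mul_sub, Finset.sum_sub_distrib]
  rw [hswap, hpull]
  ring

end Antisymmetric

theorem sum_sum_eq_add_of_eq_zero_off_pair {V M : Type*} [Fintype V] [AddCommMonoid M]
    {f : V → V → M} {j k : V} (hjk : j ≠ k) (hdiag : ∀ p, f p p = 0)
    (hleft : ∀ p q, p ≠ j ∧ p ≠ k → f p q = 0) (hright : ∀ p q, q ≠ j ∧ q ≠ k → f p q = 0) :
    ∑ p, ∑ q, f p q = f j k + f k j := by
  have hrow (p : V) : ∑ q, f p q = f p j + f p k := Fintype.sum_eq_add j k hjk (hright p)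
  rw [Fintype.sum_eq_add j k hjk fun p hp => Finset.sum_eq_zero fun q _ => hleft p q hp,
    hrow, hrow, hdiag, hdiag, zero_add, add_zero]

section AdjInd

variable {V : Type*} {G : SimpleGraph V} {p q : V}

theorem adjInd_of_adj (h : G.Adj p q) : adjInd G p q = 1 :=
  if_pos h

theorem adjInd_of_not_adj (h : ¬G.Adj p q) : adjInd G p q = 0 :=
  if_neg h

theorem adjInd_comm (G : SimpleGraph V) (p q : V) : adjInd G p q = adjInd G q p := by
  classical exact if_congr (G.adj_comm p q) rfl rfl

end AdjInd

/-- The coupling term that the oscillator `q` contributes to the velocity of the oscillator `p`;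
the velocity itself is `∑ q, coupling G θ p q`. -/
noncomputable def coupling {V : Type*} (G : SimpleGraph V) (θ : V → ℝ) (p q : V) : ℝ :=
  adjInd G q p * sin (θ q - θ p)

theorem coupling_antisymm {V : Type*} (G : SimpleGraph V) (θ : V → ℝ) (p q : V) :
    coupling G θ p q = -coupling G θ q p := by
  rw [coupling, coupling, adjInd_comm G q p, ← neg_sub, sin_neg, mul_neg]

theorem coupling_self {V : Type*} (G : SimpleGraph V) (θ : V → ℝ) (p : V) :
    coupling G θ p p = 0 := by
  rw [coupling, sub_self, sin_zero, mul_zero]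

/-- The condition of a completely degenerate equilibrium at a single vertex `p`: the couplings
acting on `p` balance, and every edge at `p` has phase difference `±π/2` modulo `2π`. -/
def IsCDEAt {V : Type*} [Fintype V] (G : SimpleGraph V) (θ : V → ℝ) (p : V) : Prop :=
  ∑ q, coupling G θ p q = 0 ∧ ∀ q, G.Adj q p → cos (θ q - θ p) = 0

theorem IsCDE.isCDEAt {V : Type*} [Fintype V] {G : SimpleGraph V} {θ : V → ℝ} (hθ : IsCDE G θ)
    (p : V) : IsCDEAt G θ p :=
  ⟨hθ.1 p, fun q => hθ.2 q p⟩

theorem sum_coupling_mul_sub {V : Type*} [Fintype V] {G : SimpleGraph V} {θ u : V → ℝ}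
    (hu : ∀ p, u p ≠ 0 → ∑ q, coupling G θ p q = 0) :
    ∑ p, ∑ q, coupling G θ p q * (u p - u q) = 0 := by
  rw [sum_sum_mul_sub_of_antisymm (coupling_antisymm G θ) u]
  refine mul_eq_zero_of_right 2 (Finset.sum_eq_zero fun p _ => ?_)
  by_cases hp : u p = 0
  · rw [hp, zero_mul]
  · rw [hu p hp, mul_zero]

theorem adjInd_mul_cos_add_sub_cos {V : Type*} {G : SimpleGraph V} {θ η : V → ℝ}
    (hη : ∀ p, η p ≠ 0 → ∀ q, G.Adj q p → cos (θ q - θ p) = 0) (p q : V) :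
    adjInd G p q * (cos ((θ p + η p) - (θ q + η q)) - cos (θ p - θ q)) =
      coupling G θ p q * sin (η p - η q) := by
  have heven : adjInd G p q * (cos (θ p - θ q) * (cos (η p - η q) - 1)) = 0 := by
    by_cases hpq : G.Adj p q
    · by_cases hp : η p = 0
      · by_cases hq : η q = 0
        · simp [hp, hq]
        · simp [hη q hq p hpq]
      · rw [← neg_sub, cos_neg, hη p hp q hpq.symm, zero_mul, mul_zero]
    · rw [adjInd_of_not_adj hpq, zero_mul]
  rw [add_sub_add_comm, cos_add, coupling, adjInd_comm G q p, ← neg_sub (θ p), sin_neg]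
  linear_combination heven

section Energy

variable {N : ℕ} {G : SimpleGraph (Fin N)} {θ η : Fin N → ℝ}

theorem energy_sub_energy_add
    (hη : ∀ p, η p ≠ 0 → ∀ q, G.Adj q p → cos (θ q - θ p) = 0) :
    energy G θ - energy G (θ + η) =
      (1 / 2) * ∑ p, ∑ q, coupling G θ p q * sin (η p - η q) := by
  simp_rw [energy, ← mul_sub, ← Finset.sum_sub_distrib, ← mul_sub, sub_sub_sub_cancel_left,
    Pi.add_apply, adjInd_mul_cos_add_sub_cos hη]

theorem energy_sub_energy_add_of_eq_zero_off_pair {j k : Fin N} (hjk : j ≠ k) (hj : IsCDEAt G θ j)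
    (hk : IsCDEAt G θ k) (hη : ∀ p, p ≠ j ∧ p ≠ k → η p = 0) :
    energy G θ - energy G (θ + η) =
      coupling G θ j k * (sin (η j - η k) - (sin (η j) - sin (η k))) := by
  have hsupp (p : Fin N) (hp : η p ≠ 0) : IsCDEAt G θ p := by
    by_cases hpj : p = j
    · exact hpj ▸ hj
    · by_cases hpk : p = k
      · exact hpk ▸ hk
      · exact absurd (hη p ⟨hpj, hpk⟩) hp
  have hbalance : ∑ p, ∑ q, coupling G θ p q * (sin (η p) - sin (η q)) = 0 :=
    sum_coupling_mul_sub (u := fun p => sin (η p)) fun p hp =>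
      (hsupp p fun h => hp (by rw [h, sin_zero])).1
  calc
    energy G θ - energy G (θ + η)
      = (1 / 2) * ∑ p, ∑ q, coupling G θ p q * (sin (η p - η q) - (sin (η p) - sin (η q))) := by
        simp_rw [energy_sub_energy_add fun p hp => (hsupp p hp).2,
          mul_sub (coupling _ _ _ _) (sin (_ - _)), Finset.sum_sub_distrib, hbalance, sub_zero]
    _ = (1 / 2) * (coupling G θ j k * (sin (η j - η k) - (sin (η j) - sin (η k))) +
          coupling G θ k j * (sin (η k - η j) - (sin (η k) - sin (η j)))) := by
        rw [sum_sum_eq_add_of_eq_zero_off_pair hjk (fun p => by rw [coupling_self, zero_mul])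
          (fun p q hp => by simp [hη p hp]) (fun p q hq => by simp [hη q hq])]
    _ = coupling G θ j k * (sin (η j - η k) - (sin (η j) - sin (η k))) := by
        rw [coupling_antisymm G θ k j, ← neg_sub (η j), sin_neg]
        ring

end Energy

theorem sin_sub_eq_one_of_eq_add_pi_div_two {α β : ℝ} (h : ∃ m : ℤ, β = α + π / 2 + 2 * π * m) :
    sin (β - α) = 1 := by
  obtain ⟨m, rfl⟩ := h
  have hdiff : α + π / 2 + 2 * π * m - α = π / 2 + m * (2 * π) := by ring
  rw [hdiff, sin_add_int_mul_two_pi, sin_pi_div_two]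

theorem stmt12_general {N : ℕ} {G : SimpleGraph (Fin N)} {θ : Fin N → ℝ} {j k : Fin N}
    (hjk : j ≠ k) (hj : IsCDEAt G θ j) (hk : IsCDEAt G θ k) (x y : ℝ) :
    energy G θ -
        energy G (fun h => if h = j then θ j + x else if h = k then θ k - y else θ h) =
      adjInd G j k * sin (θ k - θ j) * (sin (x + y) - sin x - sin y) := by
  set η : Fin N → ℝ := fun h => if h = j then x else if h = k then -y else 0 with hη
  have hperturb :
      (fun h => if h = j then θ j + x else if h = k then θ k - y else θ h) = θ + η := by
    funext h
    simp only [hη, Pi.add_apply]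
    split_ifs with hhj hhk
    · rw [hhj]
    · rw [hhk, sub_eq_add_neg]
    · rw [add_zero]
  have hηj : η j = x := if_pos rfl
  have hηk : η k = -y := by rw [hη]; simp only [hjk.symm, if_false, if_true]
  have hη_off (p : Fin N) (hp : p ≠ j ∧ p ≠ k) : η p = 0 := by
    simp only [hη, hp.1, hp.2, if_false]
  rw [hperturb, energy_sub_energy_add_of_eq_zero_off_pair hjk hj hk hη_off, hηj, hηk, coupling,
    adjInd_comm G k j, sin_neg, sub_neg_eq_add, sub_neg_eq_add, sub_add_eq_sub_sub]

/-- for a completely degenerate equilibrium `θ` and adjacent `j, k` with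
`θ k ≡ θ j + π/2 (mod 2π)`, perturbing `θ j` by `+x` and `θ k` by `−x` changes the energy by
`E(θ) − E(θ^x) = sin(2x) − 2·sin x`. -/
theorem stmt12 {N : ℕ} (G : SimpleGraph (Fin N)) (θ : Fin N → ℝ) (hθ : IsCDE G θ)
    (j k : Fin N) (hjk : G.Adj j k)
    (hphase : ∃ m : ℤ, θ k = θ j + π / 2 + 2 * π * m) (x : ℝ) :
    energy G θ -
        energy G (fun h => if h = j then θ j + x else if h = k then θ k - x else θ h) =
      Real.sin (2 * x) - 2 * Real.sin x := by
  rw [stmt12_general hjk.ne (hθ.isCDEAt j) (hθ.isCDEAt k), adjInd_of_adj hjk,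
    sin_sub_eq_one_of_eq_add_pi_div_two hphase, one_mul, one_mul, ← two_mul, sub_sub, ← two_mul]
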